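/- arXiv:quant-ph/0510076 — 8 statements merged into one kernel-verified Lean document; each statement's English description precedes it below -/
import Mathlib

section
/- Let V be a real inner product space and let x_1, x_2, y_1, y_2 ∈ V be unit vectors. Then ⟪x_1, y_1⟫ + ⟪x_1, y_2⟫ + ⟪x_2, y_1⟫ − ⟪x_2, y_2⟫ ≤ 2√2. -/
/-!
Grouping the terms by `x₁` and `x₂` turns the CHSH expression into
`⟪x₁, y₁ + y₂⟫ + ⟪x₂, y₁ - y₂⟫`, the inner product of `(x₁, x₂)` and `(y₁ + y₂, y₁ - y₂)` in the
Hilbert sum `V ⊕ V`. By the parallelogram law, `(y₁, y₂) ↦ (y₁ + y₂, y₁ - y₂)` scales norms in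
`V ⊕ V` by `√2`, so Cauchy–Schwarz bounds the expression by `√2 ‖(x₁, x₂)‖ ‖(y₁, y₂)‖`; for unit
vectors each of the two norms is `√2`.
-/

section CauchySchwarz

variable {𝕜 V : Type*} [RCLike 𝕜] [SeminormedAddCommGroup V] [InnerProductSpace 𝕜 V]

theorem norm_sum_inner_le_sqrt_mul_sqrt {ι : Type*} (s : Finset ι) (x y : ι → V) :
    ‖∑ i ∈ s, inner 𝕜 (x i) (y i)‖ ≤ √(∑ i ∈ s, ‖x i‖ ^ 2) * √(∑ i ∈ s, ‖y i‖ ^ 2) :=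
  calc
    ‖∑ i ∈ s, inner 𝕜 (x i) (y i)‖ ≤ ∑ i ∈ s, ‖x i‖ * ‖y i‖ :=
      norm_sum_le_of_le s fun i _ => norm_inner_le_norm (x i) (y i)
    _ ≤ √(∑ i ∈ s, ‖x i‖ ^ 2) * √(∑ i ∈ s, ‖y i‖ ^ 2) :=
      Real.sum_mul_le_sqrt_mul_sqrt s (‖x ·‖) (‖y ·‖)

theorem norm_inner_add_inner_le_sqrt_mul_sqrt (x₁ x₂ y₁ y₂ : V) :
    ‖inner 𝕜 x₁ y₁ + inner 𝕜 x₂ y₂‖ ≤ √(‖x₁‖ ^ 2 + ‖x₂‖ ^ 2) * √(‖y₁‖ ^ 2 + ‖y₂‖ ^ 2) := by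
  simpa [Fin.sum_univ_two] using
    norm_sum_inner_le_sqrt_mul_sqrt (𝕜 := 𝕜) Finset.univ ![x₁, x₂] ![y₁, y₂]

end CauchySchwarz

theorem sqrt_norm_add_sq_add_norm_sub_sq (𝕜 : Type*) {V : Type*} [RCLike 𝕜]
    [SeminormedAddCommGroup V] [InnerProductSpace 𝕜 V] (x y : V) :
    √(‖x + y‖ ^ 2 + ‖x - y‖ ^ 2) = √2 * √(‖x‖ ^ 2 + ‖y‖ ^ 2) := by
  have parallelogram : ‖x + y‖ ^ 2 + ‖x - y‖ ^ 2 = 2 * (‖x‖ ^ 2 + ‖y‖ ^ 2) := by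
    simpa only [sq] using parallelogram_law_with_norm 𝕜 x y
  rw [parallelogram, Real.sqrt_mul zero_le_two]

theorem chsh_vector_bound_general {𝕜 V : Type*} [RCLike 𝕜] [SeminormedAddCommGroup V]
    [InnerProductSpace 𝕜 V] (x₁ x₂ y₁ y₂ : V) :
    ‖inner 𝕜 x₁ y₁ + inner 𝕜 x₁ y₂ + inner 𝕜 x₂ y₁ - inner 𝕜 x₂ y₂‖ ≤
      √2 * (√(‖x₁‖ ^ 2 + ‖x₂‖ ^ 2) * √(‖y₁‖ ^ 2 + ‖y₂‖ ^ 2)) :=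
  calc
    ‖inner 𝕜 x₁ y₁ + inner 𝕜 x₁ y₂ + inner 𝕜 x₂ y₁ - inner 𝕜 x₂ y₂‖ =
        ‖inner 𝕜 x₁ (y₁ + y₂) + inner 𝕜 x₂ (y₁ - y₂)‖ := by
      rw [inner_add_right, inner_sub_right, add_sub_assoc]
    _ ≤ √(‖x₁‖ ^ 2 + ‖x₂‖ ^ 2) * √(‖y₁ + y₂‖ ^ 2 + ‖y₁ - y₂‖ ^ 2) :=
      norm_inner_add_inner_le_sqrt_mul_sqrt x₁ x₂ (y₁ + y₂) (y₁ - y₂)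
    _ = √2 * (√(‖x₁‖ ^ 2 + ‖x₂‖ ^ 2) * √(‖y₁‖ ^ 2 + ‖y₂‖ ^ 2)) := by
      rw [sqrt_norm_add_sq_add_norm_sub_sq 𝕜, mul_left_comm]

/-- Vector form of Tsirelson's CHSH bound: for unit vectors `x₁ x₂ y₁ y₂` in a real
inner product space, `⟪x₁,y₁⟫ + ⟪x₁,y₂⟫ + ⟪x₂,y₁⟫ - ⟪x₂,y₂⟫ ≤ 2√2`. -/
theorem chsh_vector_bound
    (V : Type*) [NormedAddCommGroup V] [InnerProductSpace ℝ V]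
    (x₁ x₂ y₁ y₂ : V)
    (hx₁ : ‖x₁‖ = 1) (hx₂ : ‖x₂‖ = 1) (hy₁ : ‖y₁‖ = 1) (hy₂ : ‖y₂‖ = 1) :
    inner (𝕜 := ℝ) x₁ y₁ + inner (𝕜 := ℝ) x₁ y₂ + inner (𝕜 := ℝ) x₂ y₁
        - inner (𝕜 := ℝ) x₂ y₂ ≤ 2 * Real.sqrt 2 := by
  refine (Real.le_norm_self _).trans ((chsh_vector_bound_general x₁ x₂ y₁ y₂).trans_eq ?_)
  norm_num [hx₁, hx₂, hy₁, hy₂, mul_comm]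
end

section
/- Let n ≥ 1, let V be a real inner product space, and let x_1,…,x_n, y_1,…,y_n ∈ V be unit vectors. Then ∑_{i=1}^{n} ⟪x_i, y_i⟫ + ∑_{i=1}^{n-1} ⟪x_{i+1}, y_i⟫ − ⟪x_1, y_n⟫ ≤ 2n·cos(π/(2n)). -/
/-!
Compare the chain `x 0, y 0, x 1, y 1, …, y (n - 1)` with equally spaced points on a unit
half-circle. Expanding `‖sin b • u - sin (a + b) • v + sin a • w‖² ≥ 0` shows that the quantity
`(⟪u, v⟫ - cos a) / sin a`, which vanishes on two planar unit vectors at angle `a`, is superadditive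
along chains of vectors as long as the angles add up to less than `π`. The `2 * n - 1` steps of
angle `a = π / (2 * n)` add up to `π - a`, and since `sin (π - a) = sin a` the denominators cancel,
leaving the value `2 * n * cos a` of the planar configuration.
-/

section Excess

open Real Finset
open scoped RealInnerProductSpace

variable {V : Type*} [SeminormedAddCommGroup V] [InnerProductSpace ℝ V]

/-- The excess of `⟪u, v⟫` over its value for two planar unit vectors at angle `a`, normalized by
`sin a` so as to be superadditive along chains of vectors. It is meant for `0 < a < π`, where the
denominator is positive. -/
noncomputable def cosExcess (a : ℝ) (u v : V) : ℝ :=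
  (⟪u, v⟫ - cos a) / sin a

lemma sin_sq_add_sin_sq_add_sin_add_sq (a b : ℝ) :
    sin a ^ 2 + sin b ^ 2 + sin (a + b) ^ 2 =
      2 * (sin b * sin (a + b) * cos a + sin a * sin (a + b) * cos b
        - sin a * sin b * cos (a + b)) := by
  rw [sin_add, cos_add]
  linear_combination -(sin b ^ 2) * sin_sq_add_cos_sq a - sin a ^ 2 * sin_sq_add_cos_sq b

lemma sin_mul_inner_sub_cos_add_le (a b : ℝ) {u v w : V}
    (hu : ‖u‖ ≤ 1) (hv : ‖v‖ ≤ 1) (hw : ‖w‖ ≤ 1) :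
    sin b * sin (a + b) * (⟪u, v⟫ - cos a) + sin a * sin (a + b) * (⟪v, w⟫ - cos b)
      ≤ sin a * sin b * (⟪u, w⟫ - cos (a + b)) := by
  have norm_sq_smul_le (r : ℝ) {z : V} (hz : ‖z‖ ≤ 1) : ‖r • z‖ ^ 2 ≤ r ^ 2 := by
    rw [norm_smul, mul_pow, Real.norm_eq_abs, sq_abs]
    exact mul_le_of_le_one_right (sq_nonneg r) (pow_le_one₀ (norm_nonneg z) hz)
  have expansion := norm_add_sq_real (sin b • u - sin (a + b) • v) (sin a • w)
  rw [norm_sub_sq_real] at expansion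
  simp only [inner_sub_left, real_inner_smul_left, real_inner_smul_right] at expansion
  linarith [sq_nonneg ‖sin b • u - sin (a + b) • v + sin a • w‖,
    norm_sq_smul_le (sin b) hu, norm_sq_smul_le (sin (a + b)) hv, norm_sq_smul_le (sin a) hw,
    sin_sq_add_sin_sq_add_sin_add_sq a b]

lemma cosExcess_add_le {a b : ℝ} (ha : 0 < a) (hb : 0 < b) (hab : a + b < π) {u v w : V}
    (hu : ‖u‖ ≤ 1) (hv : ‖v‖ ≤ 1) (hw : ‖w‖ ≤ 1) :
    cosExcess a u v + cosExcess b v w ≤ cosExcess (a + b) u w := by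
  have sin_a : 0 < sin a := sin_pos_of_pos_of_lt_pi ha (by linarith)
  have sin_b : 0 < sin b := sin_pos_of_pos_of_lt_pi hb (by linarith)
  have sin_ab : 0 < sin (a + b) := sin_pos_of_pos_of_lt_pi (by linarith) hab
  unfold cosExcess
  rw [div_add_div _ _ sin_a.ne' sin_b.ne', div_le_div_iff₀ (mul_pos sin_a sin_b) sin_ab]
  linarith [sin_mul_inner_sub_cos_add_le a b hu hv hw]

lemma sum_cosExcess_le (a : ℕ → ℝ) (z : ℕ → V) (m : ℕ) (ha : ∀ k ≤ m, 0 < a k)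
    (hsum : ∑ k ∈ range (m + 1), a k < π) (hz : ∀ k ≤ m + 1, ‖z k‖ ≤ 1) :
    ∑ k ∈ range (m + 1), cosExcess (a k) (z k) (z (k + 1))
      ≤ cosExcess (∑ k ∈ range (m + 1), a k) (z 0) (z (m + 1)) := by
  induction m with
  | zero => simp
  | succ m ih =>
    have last_pos : 0 < a (m + 1) := ha _ le_rfl
    have init_pos : 0 < ∑ k ∈ range (m + 1), a k :=
      sum_pos (fun k hk => ha k (mem_range.mp hk).le) nonempty_range_add_one
    rw [sum_range_succ] at hsum
    rw [sum_range_succ, sum_range_succ a]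
    calc
      _ ≤ cosExcess (∑ k ∈ range (m + 1), a k) (z 0) (z (m + 1))
          + cosExcess (a (m + 1)) (z (m + 1)) (z (m + 2)) := by
          gcongr
          exact ih (fun k hk => ha k (by omega)) (by linarith) (fun k hk => hz k (by omega))
      _ ≤ _ := cosExcess_add_le init_pos last_pos hsum (hz _ (by omega)) (hz _ (by omega))
          (hz _ le_rfl)

theorem sum_inner_succ_sub_inner_le (z : ℕ → V) (m : ℕ) (hz : ∀ k ≤ m + 1, ‖z k‖ ≤ 1) :
    ∑ k ∈ range (m + 1), ⟪z k, z (k + 1)⟫ - ⟪z 0, z (m + 1)⟫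
      ≤ (m + 2) * cos (π / (m + 2)) := by
  set a : ℝ := π / (m + 2) with a_def
  have a_pos : 0 < a := by positivity
  have sum_angles : ∑ _k ∈ range (m + 1), a = π - a := by
    rw [sum_const, card_range, nsmul_eq_mul, a_def]
    push_cast
    field_simp
    ring
  have a_lt_pi : a < π := div_lt_self pi_pos (by linarith [m.cast_nonneg (α := ℝ)])
  have sin_a_pos : 0 < sin a := sin_pos_of_pos_of_lt_pi a_pos a_lt_pi
  have excess_le := sum_cosExcess_le (fun _ => a) z m (fun _ _ => a_pos)
    (by rw [sum_angles]; linarith) hz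
  simp only [sum_angles, cosExcess, sin_pi_sub, cos_pi_sub] at excess_le
  rw [← sum_div, div_le_div_iff_of_pos_right sin_a_pos, sum_sub_distrib, sum_const,
    card_range, nsmul_eq_mul] at excess_le
  push_cast at excess_le
  linarith

end Excess

section Interleave

open Finset
open scoped RealInnerProductSpace

variable {α : Type*}

/-- The sequence `x 0, y 0, x 1, y 1, …`, which arranges two families of vectors into one chain. -/
def interleave (x y : ℕ → α) (k : ℕ) : α :=
  if Even k then x (k / 2) else y (k / 2)

lemma interleave_two_mul (x y : ℕ → α) (i : ℕ) : interleave x y (2 * i) = x i := by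
  simp [interleave]

lemma interleave_two_mul_add_one (x y : ℕ → α) (i : ℕ) : interleave x y (2 * i + 1) = y i := by
  simp [interleave, Nat.mul_add_div]

lemma interleave_of_forall_lt {p : α → Prop} {x y : ℕ → α} {n : ℕ}
    (hx : ∀ i < n, p (x i)) (hy : ∀ i < n, p (y i)) {k : ℕ} (hk : k < 2 * n) :
    p (interleave x y k) := by
  unfold interleave
  split_ifs
  · exact hx _ (by omega)
  · exact hy _ (by omega)

lemma sum_range_two_mul_add_one {M : Type*} [AddCommMonoid M] (f : ℕ → M) (n : ℕ) :
    ∑ k ∈ range (2 * n + 1), f k =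
      ∑ i ∈ range (n + 1), f (2 * i) + ∑ i ∈ range n, f (2 * i + 1) := by
  induction n with
  | zero => simp
  | succ n ih =>
    rw [mul_add_one, sum_range_succ, sum_range_succ, ih, sum_range_succ _ (n + 1),
      sum_range_succ (fun i => f (2 * i + 1)), mul_add_one]
    abel

lemma sum_inner_interleave {V : Type*} [SeminormedAddCommGroup V] [InnerProductSpace ℝ V]
    (x y : ℕ → V) (n : ℕ) :
    ∑ k ∈ range (2 * n + 1), ⟪interleave x y k, interleave x y (k + 1)⟫ =
      ∑ i ∈ range (n + 1), ⟪x i, y i⟫ + ∑ i ∈ range n, ⟪x (i + 1), y i⟫ := by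
  have interleave_succ_odd (i : ℕ) : interleave x y (2 * i + 1 + 1) = x (i + 1) :=
    interleave_two_mul x y (i + 1)
  simp only [sum_range_two_mul_add_one, interleave_two_mul, interleave_two_mul_add_one,
    interleave_succ_odd, real_inner_comm]

end Interleave

theorem chained_chsh_vector_bound_general
    (n : ℕ) (hn : 1 ≤ n)
    (V : Type*) [SeminormedAddCommGroup V] [InnerProductSpace ℝ V]
    (x y : ℕ → V) (hx : ∀ i < n, ‖x i‖ ≤ 1) (hy : ∀ i < n, ‖y i‖ ≤ 1) :
    (∑ i ∈ Finset.range n, inner (𝕜 := ℝ) (x i) (y i))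
      + (∑ i ∈ Finset.range (n - 1), inner (𝕜 := ℝ) (x (i + 1)) (y i))
      - inner (𝕜 := ℝ) (x 0) (y (n - 1))
      ≤ 2 * n * Real.cos (Real.pi / (2 * n)) := by
  obtain ⟨m, rfl⟩ := Nat.exists_eq_add_of_le' hn
  have chain_le := sum_inner_succ_sub_inner_le (interleave x y) (2 * m)
    fun k hk => interleave_of_forall_lt (p := (‖·‖ ≤ 1)) hx hy (by omega)
  have interleave_zero : interleave x y 0 = x 0 := interleave_two_mul x y 0
  have card_eq : ((2 * m : ℕ) : ℝ) + 2 = 2 * (m + 1 : ℕ) := by push_cast; ring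
  rwa [sum_inner_interleave, interleave_zero, interleave_two_mul_add_one, card_eq] at chain_le

/-- Vector form of the Tsirelson bound for the chained CHSH inequality with `n` settings:
for unit vectors `x 0, …, x (n-1), y 0, …, y (n-1)` in a real inner product space,
`∑ ⟪x i, y i⟫ + ∑ ⟪x (i+1), y i⟫ - ⟪x 0, y (n-1)⟫ ≤ 2 n cos (π / (2n))`. -/
theorem chained_chsh_vector_bound
    (n : ℕ) (hn : 1 ≤ n)
    (V : Type*) [NormedAddCommGroup V] [InnerProductSpace ℝ V]
    (x y : ℕ → V) (hx : ∀ i < n, ‖x i‖ = 1) (hy : ∀ i < n, ‖y i‖ = 1) :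
    (∑ i ∈ Finset.range n, inner (𝕜 := ℝ) (x i) (y i))
      + (∑ i ∈ Finset.range (n - 1), inner (𝕜 := ℝ) (x (i + 1)) (y i))
      - inner (𝕜 := ℝ) (x 0) (y (n - 1))
      ≤ 2 * n * Real.cos (Real.pi / (2 * n)) :=
  chained_chsh_vector_bound_general n hn V x y (fun i hi => (hx i hi).le) fun i hi => (hy i hi).le
end

section
/- Let n ≥ 1 and for k ∈ {1,…,n} define unit vectors in ℝ² by x_k = (cos φ_k, sin φ_k) and y_k = (cos ψ_k, sin ψ_k), where φ_k = (π/(2n))·(2k − 2) and ψ_k = (π/(2n))·(2k − 1). Then ∑_{k=1}^{n} ⟪x_k, y_k⟫ + ∑_{k=1}^{n-1} ⟪x_{k+1}, y_k⟫ − ⟪x_1, y_n⟫ = 2n·cos(π/(2n)); in particular each of the terms ⟪x_k, y_k⟫, ⟪x_{k+1}, y_k⟫, and −⟪x_1, y_n⟫ equals cos(π/(2n)). -/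
/-!
Consecutive vectors of the chain `x 0, y 0, x 1, y 1, …, y (n - 1)` are separated by the angle
`θ = π / (2 * n)`, so their inner product is `cos θ`. The chain sweeps out `(2 * n - 1) * θ = π - θ`
in total, so its two ends have inner product `-cos θ`, which the minus sign in the chained CHSH
expression turns into one more `cos θ`.
-/

open Real
open scoped RealInnerProductSpace

/-- The unit vector of the Euclidean plane at polar angle `α`, describing a measurement setting. -/
noncomputable def planarUnitVector (α : ℝ) : EuclideanSpace ℝ (Fin 2) :=
  !₂[cos α, sin α]

theorem inner_planarUnitVector (α β : ℝ) :
    ⟪planarUnitVector α, planarUnitVector β⟫ = cos (α - β) := by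
  simp [planarUnitVector, PiLp.inner_apply, cos_sub, mul_comm]

theorem norm_planarUnitVector (α : ℝ) : ‖planarUnitVector α‖ = 1 := by
  rw [norm_eq_sqrt_real_inner, inner_planarUnitVector, sub_self, cos_zero, sqrt_one]

theorem inner_planarUnitVector_add_right (α θ : ℝ) :
    ⟪planarUnitVector α, planarUnitVector (α + θ)⟫ = cos θ := by
  rw [inner_planarUnitVector, sub_add_cancel_left, cos_neg]

theorem inner_planarUnitVector_add_left (α θ : ℝ) :
    ⟪planarUnitVector (α + θ), planarUnitVector α⟫ = cos θ := by
  rw [real_inner_comm, inner_planarUnitVector_add_right]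

/-- The chained CHSH expression with `n` settings per party, where `E j k` is the correlation of
the settings `j` and `k` of the two parties. Settings are numbered from `0`, so the closing pair is
`(0, n - 1)`; the expression is meaningful for `1 ≤ n`. -/
def chainedCHSH {M : Type*} [AddCommGroup M] (n : ℕ) (E : ℕ → ℕ → M) : M :=
  ∑ k ∈ Finset.range n, E k k + ∑ k ∈ Finset.range (n - 1), E (k + 1) k - E 0 (n - 1)

theorem chainedCHSH_eq_nsmul {M : Type*} [AddCommGroup M] {n : ℕ} (hn : 1 ≤ n)
    {E : ℕ → ℕ → M} {c : M} (h_same : ∀ k < n, E k k = c)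
    (h_next : ∀ k < n - 1, E (k + 1) k = c) (h_close : -E 0 (n - 1) = c) :
    chainedCHSH n E = (2 * n) • c := by
  have sum_same : ∑ k ∈ Finset.range n, E k k = n • c := by
    rw [Finset.sum_eq_card_nsmul (by simpa using h_same), Finset.card_range]
  have sum_next : ∑ k ∈ Finset.range (n - 1), E (k + 1) k = (n - 1) • c := by
    rw [Finset.sum_eq_card_nsmul (by simpa using h_next), Finset.card_range]
  calc chainedCHSH n E = n • c + (n - 1) • c + c := by
        rw [chainedCHSH, sum_same, sum_next, sub_eq_add_neg, h_close]
    _ = (n + (n - 1) + 1) • c := by rw [succ_nsmul, add_nsmul]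
    _ = (2 * n) • c := by congr 1; lia

/-- The optimal vectors for the chained CHSH inequality: with
`x k = (cos φ_k, sin φ_k)`, `y k = (cos ψ_k, sin ψ_k)` in `ℝ²`, where
`φ_k = (π/(2n))·2k` and `ψ_k = (π/(2n))·(2k+1)` for `k = 0, …, n-1`
(0-indexed version of `φ_k = (π/(2n))(2k-2)`, `ψ_k = (π/(2n))(2k-1)` for `k = 1, …, n`),
each vector is a unit vector, each term of the chained CHSH expression equals
`cos (π/(2n))`, and the whole expression equals `2 n cos (π/(2n))`. -/
theorem chained_chsh_optimal_vectors
    (n : ℕ) (hn : 1 ≤ n)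
    (φ ψ : ℕ → ℝ)
    (hφ : ∀ k, φ k = Real.pi / (2 * n) * (2 * k))
    (hψ : ∀ k, ψ k = Real.pi / (2 * n) * (2 * k + 1))
    (x y : ℕ → EuclideanSpace ℝ (Fin 2))
    (hx : ∀ k, x k = (WithLp.equiv 2 (Fin 2 → ℝ)).symm ![Real.cos (φ k), Real.sin (φ k)])
    (hy : ∀ k, y k = (WithLp.equiv 2 (Fin 2 → ℝ)).symm ![Real.cos (ψ k), Real.sin (ψ k)]) :
    (∀ k, ‖x k‖ = 1) ∧ (∀ k, ‖y k‖ = 1) ∧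
    (∀ k < n, inner (𝕜 := ℝ) (x k) (y k) = Real.cos (Real.pi / (2 * n))) ∧
    (∀ k < n - 1, inner (𝕜 := ℝ) (x (k + 1)) (y k) = Real.cos (Real.pi / (2 * n))) ∧
    (-(inner (𝕜 := ℝ) (x 0) (y (n - 1)) : ℝ) = Real.cos (Real.pi / (2 * n))) ∧
    (∑ k ∈ Finset.range n, inner (𝕜 := ℝ) (x k) (y k))
      + (∑ k ∈ Finset.range (n - 1), inner (𝕜 := ℝ) (x (k + 1)) (y k))
      - inner (𝕜 := ℝ) (x 0) (y (n - 1))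
      = 2 * n * Real.cos (Real.pi / (2 * n)) := by
  set θ : ℝ := π / (2 * n) with hθ
  replace hx : ∀ k, x k = planarUnitVector (φ k) := hx
  replace hy : ∀ k, y k = planarUnitVector (ψ k) := hy
  have angle_same (k : ℕ) : ψ k = φ k + θ := by rw [hφ, hψ]; ring
  have angle_next (k : ℕ) : φ (k + 1) = ψ k + θ := by rw [hφ, hψ]; push_cast; ring
  have angle_close : ψ (n - 1) = φ 0 + (π - θ) := by
    rw [hφ, hψ, hθ]
    push_cast [Nat.cast_sub hn]
    field_simp
    ring
  have inner_same (k : ℕ) : ⟪x k, y k⟫ = cos θ := by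
    rw [hx, hy, angle_same, inner_planarUnitVector_add_right]
  have inner_next (k : ℕ) : ⟪x (k + 1), y k⟫ = cos θ := by
    rw [hx, hy, angle_next, inner_planarUnitVector_add_left]
  have inner_close : -⟪x 0, y (n - 1)⟫ = cos θ := by
    rw [hx, hy, angle_close, inner_planarUnitVector_add_right, cos_pi_sub, neg_neg]
  refine ⟨fun k => hx k ▸ norm_planarUnitVector _, fun k => hy k ▸ norm_planarUnitVector _,
    fun k _ => inner_same k, fun k _ => inner_next k, inner_close, ?_⟩
  simpa [chainedCHSH] using chainedCHSH_eq_nsmul (E := fun j k => ⟪x j, y k⟫) hn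
    (fun k _ => inner_same k) (fun k _ => inner_next k) inner_close
end

section
/- Let n ≥ 1 and let A be the n×n complex matrix with A_{jj} = 1 for all j, A_{j,j+1} = 1 for j = 1,…,n−1, A_{n,1} = −1, and all other entries 0. Then for each s ∈ {0,…,n−1}, the number 2 + 2·cos(π(2s+1)/n) is an eigenvalue of the positive semidefinite matrix Aᴴ·A (where Aᴴ is the conjugate transpose); equivalently, the singular values of A are √(2 + 2·cos(π(2s+1)/n)) for s = 0,…,n−1. -/
open Matrix
open scoped ComplexOrder

/-- The `n × n` matrix of the chained CHSH semidefinite program: `1`'s on the main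
diagonal and first superdiagonal, `-1` in the lower-left corner, `0` elsewhere. -/
def chainA (n : ℕ) : Matrix (Fin n) (Fin n) ℂ :=
  Matrix.of fun j k =>
    (if j = k then 1 else 0) + (if (k : ℕ) = (j : ℕ) + 1 then 1 else 0)
      - (if (j : ℕ) = n - 1 ∧ (k : ℕ) = 0 then 1 else 0)

/-
`A = 1 + S`, where `S` is the cyclic shift with a sign change at the wrap-around. This `S` is
unitary, and each `w` with `w ^ n = -1` is an eigenvalue of it, with eigenvector
`(1, w, …, w ^ (n - 1))`. Then `Aᴴ * A = (1 + S⁻¹) * (1 + S)` has the eigenvalue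
`(1 + w⁻¹) * (1 + w)`, which is `2 + 2 cos t` for `w = exp (t * I)`.
-/

section StarAlgebra

variable {K R : Type*} [Field K] [Ring R] [StarRing R] [Algebra K R]

theorem one_add_inv_mul_one_add_mem_spectrum_of_mem_unitary {u : R}
    (hu : u ∈ unitary R) {w : K} (hw : w ∈ spectrum K u) :
    (1 + w⁻¹) * (1 + w) ∈ spectrum K (star (1 + u) * (1 + u)) := by
  have hw0 : w ≠ 0 := spectrum.ne_zero_of_mem_of_unit (a := Unitary.toUnits ⟨u, hu⟩) hw
  have hstar : star u * u = 1 := Unitary.star_mul_self_of_mem hu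
  have hself : u * star u = 1 := Unitary.mul_star_self_of_mem hu
  have hcomm : Commute (algebraMap K R w - u) (1 - w⁻¹ • star u) :=
    (Algebra.commute_algebraMap_left w _).sub_left
      ((Commute.one_right u).sub_right (Commute.smul_right (hself.trans hstar.symm) w⁻¹))
  have hfactor : algebraMap K R ((1 + w⁻¹) * (1 + w)) - star (1 + u) * (1 + u) =
      (algebraMap K R w - u) * (1 - w⁻¹ • star u) := by
    rw [star_add, star_one, Algebra.algebraMap_eq_smul_one, Algebra.algebraMap_eq_smul_one]
    simp only [add_mul, mul_add, sub_mul, mul_sub, one_mul, mul_one, smul_mul_assoc,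
      mul_smul_comm, hself, hstar, inv_mul_cancel₀ hw0]
    match_scalars <;> field_simp
    ring
  rw [spectrum.mem_iff, hfactor, hcomm.isUnit_mul_iff]
  exact fun h ↦ hw h.1

end StarAlgebra

section Matrix

variable {m : Type*} [Fintype m] [DecidableEq m]

theorem permMatrix_mem_unitaryGroup {R : Type*} [CommRing R] [StarRing R] (σ : Equiv.Perm m) :
    σ.permMatrix R ∈ unitaryGroup m R := by
  rw [mem_unitaryGroup_iff, star_eq_conjTranspose, conjTranspose_permMatrix, ← permMatrix_mul,
    inv_mul_cancel, permMatrix_one]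

theorem diagonal_mem_unitaryGroup {R : Type*} [CommRing R] [StarRing R] {d : m → R}
    (hd : ∀ i, d i ∈ unitary R) : diagonal d ∈ unitaryGroup m R := by
  rw [mem_unitaryGroup_iff, star_eq_conjTranspose, diagonal_conjTranspose, diagonal_mul_diagonal,
    ← diagonal_one]
  exact congrArg diagonal (funext fun i ↦ Unitary.mul_star_self_of_mem (hd i))

theorem mem_spectrum_of_mulVec_eq_smul {K : Type*} [Field K] {M : Matrix m m K} {v : m → K}
    {w : K} (hv : v ≠ 0) (h : M *ᵥ v = w • v) : w ∈ spectrum K M := by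
  rw [← spectrum_toLin']
  exact (Module.End.hasEigenvalue_of_hasEigenvector
    ⟨Module.End.mem_eigenspace_iff.mpr h, hv⟩).mem_spectrum

end Matrix

theorem val_finRotate_eq_ite {n : ℕ} (j : Fin n) :
    (finRotate n j : ℕ) = if (j : ℕ) + 1 = n then 0 else (j : ℕ) + 1 := by
  cases n with
  | zero => exact j.elim0
  | succ n => simp only [coe_finRotate, Fin.ext_iff, Fin.val_last, Nat.succ_inj]

/-- The matrix of the negacyclic shift `(v₀, …, vₙ₋₁) ↦ (v₁, …, vₙ₋₁, -v₀)`, encoded as the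
permutation matrix of the rotation of `Fin n` with the sign of its last row changed. It is what
the chained CHSH matrix adds to the identity. -/
def negacyclicShift (R : Type*) [Ring R] (n : ℕ) : Matrix (Fin n) (Fin n) R :=
  diagonal (fun j : Fin n ↦ if (j : ℕ) + 1 = n then -1 else 1) * (finRotate n).permMatrix R

section negacyclicShift

variable {n : ℕ}

theorem negacyclicShift_apply {R : Type*} [Ring R] (j k : Fin n) :
    negacyclicShift R n j k =
      if finRotate n j = k then if (j : ℕ) + 1 = n then -1 else 1 else 0 := by
  simp [negacyclicShift, diagonal_mul, PEquiv.toMatrix_apply]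

theorem negacyclicShift_mem_unitaryGroup {R : Type*} [CommRing R] [StarRing R] :
    negacyclicShift R n ∈ unitaryGroup (Fin n) R :=
  mul_mem (diagonal_mem_unitaryGroup fun j ↦ by split_ifs <;> simp [Unitary.mem_iff])
    (permMatrix_mem_unitaryGroup _)

theorem negacyclicShift_mulVec_pow {R : Type*} [CommRing R] {w : R} (hw : w ^ n = -1) :
    negacyclicShift R n *ᵥ (fun j ↦ w ^ (j : ℕ)) = w • fun j : Fin n ↦ w ^ (j : ℕ) := by
  ext j
  have hshift : (negacyclicShift R n *ᵥ fun j ↦ w ^ (j : ℕ)) j =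
      (if (j : ℕ) + 1 = n then -1 else 1) * w ^ (finRotate n j : ℕ) := by
    rw [negacyclicShift, ← mulVec_mulVec, permMatrix_mulVec, mulVec_diagonal, Function.comp_apply]
  rw [hshift, val_finRotate_eq_ite, Pi.smul_apply, smul_eq_mul, ← pow_succ']
  split_ifs with hj
  · rw [hj, hw, pow_zero, mul_one]
  · rw [one_mul]

theorem mem_spectrum_negacyclicShift {K : Type*} [Field K] (hn : n ≠ 0) {w : K}
    (hw : w ^ n = -1) : w ∈ spectrum K (negacyclicShift K n) := by
  refine mem_spectrum_of_mulVec_eq_smul (fun h ↦ ?_) (negacyclicShift_mulVec_pow hw)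
  simpa using congrFun h ⟨0, Nat.pos_of_ne_zero hn⟩

end negacyclicShift

theorem chainA_eq_one_add_negacyclicShift (n : ℕ) : chainA n = 1 + negacyclicShift ℂ n := by
  ext j k
  have hj := j.isLt
  simp only [chainA, of_apply, Matrix.add_apply, one_apply, negacyclicShift_apply, Fin.ext_iff,
    val_finRotate_eq_ite]
  split_ifs <;> first | omega | simp

theorem one_add_inv_mul_one_add_mem_spectrum_chainA {n : ℕ} (hn : n ≠ 0) {w : ℂ}
    (hw : w ^ n = -1) : (1 + w⁻¹) * (1 + w) ∈ spectrum ℂ ((chainA n)ᴴ * chainA n) := by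
  rw [chainA_eq_one_add_negacyclicShift]
  exact one_add_inv_mul_one_add_mem_spectrum_of_mem_unitary (R := Matrix (Fin n) (Fin n) ℂ)
    negacyclicShift_mem_unitaryGroup (mem_spectrum_negacyclicShift hn hw)

theorem exp_pi_mul_odd_div_mul_I_pow {n : ℕ} (hn : n ≠ 0) (s : ℤ) :
    Complex.exp ((Real.pi * (2 * s + 1) / n : ℝ) * Complex.I) ^ n = -1 := by
  have hangle : (n : ℂ) * ((Real.pi * (2 * s + 1) / n : ℝ) * Complex.I) =
      Real.pi * Complex.I + s * (2 * Real.pi * Complex.I) := by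
    push_cast
    field_simp
    ring
  rw [← Complex.exp_nat_mul, hangle, Complex.exp_add, Complex.exp_pi_mul_I,
    Complex.exp_int_mul_two_pi_mul_I, mul_one]

theorem one_add_exp_inv_mul_one_add_exp (t : ℝ) :
    (1 + (Complex.exp (t * Complex.I))⁻¹) * (1 + Complex.exp (t * Complex.I)) =
      ((2 + 2 * Real.cos t : ℝ) : ℂ) := by
  push_cast
  rw [Complex.two_cos, neg_mul, Complex.exp_neg]
  field_simp
  ring

theorem chainA_conjTranspose_mul_self_eigenvalue_general (n : ℕ) (hn : 1 ≤ n) (s : ℤ) :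
    ((chainA n)ᴴ * chainA n).PosSemidef ∧
    (((2 + 2 * Real.cos (Real.pi * (2 * s + 1) / n) : ℝ) : ℂ)
        ∈ spectrum ℂ ((chainA n)ᴴ * chainA n)) := by
  have hn0 : n ≠ 0 := Nat.one_le_iff_ne_zero.mp hn
  refine ⟨posSemidef_conjTranspose_mul_self _, ?_⟩
  rw [← one_add_exp_inv_mul_one_add_exp]
  exact one_add_inv_mul_one_add_mem_spectrum_chainA hn0 (exp_pi_mul_odd_div_mul_I_pow hn0 s)

/-- The singular values of the chained CHSH matrix `A`: for each `s = 0, …, n-1`,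
the number `2 + 2 cos (π(2s+1)/n)` is an eigenvalue of the positive semidefinite
matrix `Aᴴ A`, i.e. the singular values of `A` are `√(2 + 2 cos (π(2s+1)/n))`. -/
theorem chainA_conjTranspose_mul_self_eigenvalue
    (n : ℕ) (hn : 1 ≤ n) (s : ℕ) (hs : s < n) :
    ((chainA n)ᴴ * chainA n).PosSemidef ∧
    (((2 + 2 * Real.cos (Real.pi * (2 * s + 1) / n) : ℝ) : ℂ)
        ∈ spectrum ℂ ((chainA n)ᴴ * chainA n)) := by
  exact_mod_cast chainA_conjTranspose_mul_self_eigenvalue_general n hn s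
end

section
/- Let n ≥ 1, let A be the n×n complex matrix with A_{jj} = 1 for all j, A_{j,j+1} = 1 for j = 1,…,n−1, A_{n,1} = −1, and all other entries 0, and let W be the 2n×2n Hermitian block matrix W = [[0, Aᴴ], [A, 0]]. Then the largest eigenvalue of W equals 2·cos(π/(2n)). -/
/-!
The matrix `chainW n` is `U + U*`, where `U` cyclically shifts `2n` coordinates with one sign
change. This `U` is unitary with characteristic polynomial `X ^ (2n) + 1`, so its eigenvalues are
exactly the `2n`-th roots `z` of `-1`. Since `U` is normal, the eigenvalues of `U + U*` are the
numbers `2 Re z`, and the largest of them comes from `z = exp (iπ / 2n)`.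
-/

open Matrix

/-- The `2n × 2n` Hermitian block matrix `W = [[0, Aᴴ], [A, 0]]` of the chained CHSH
semidefinite program. -/
def chainW (n : ℕ) : Matrix (Fin n ⊕ Fin n) (Fin n ⊕ Fin n) ℂ :=
  Matrix.fromBlocks 0 (chainA n)ᴴ (chainA n) 0

open Polynomial ComplexStarModule

section BlockAntidiagonal

variable {R m n : Type*} [CommRing R] [Fintype m] [DecidableEq m] [Fintype n] [DecidableEq n]

theorem X_pow_mul_charpoly_fromBlocks_zero_zero (B : Matrix m n R) (D : Matrix n m R) :
    X ^ Fintype.card m * (fromBlocks 0 B D 0).charpoly =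
      X ^ Fintype.card n * expand R 2 (B * D).charpoly := by
  let N : Matrix (m ⊕ n) (m ⊕ n) R[X] := fromBlocks (scalar m X) 0 (D.map C) 1
  have det_N : N.det = X ^ Fintype.card m := by simp [N]
  have charmatrix_mul_N : charmatrix (fromBlocks 0 B D 0) * N =
      fromBlocks (scalar m (X ^ 2) - (B * D).map C) (-B.map C) 0 (scalar n X) := by
    simp [N, charmatrix_fromBlocks, fromBlocks_multiply, pow_two, ← sub_eq_add_neg,
      ← smul_eq_diagonal_mul, ← smul_eq_mul_diagonal, ← diagonal_smul, Pi.smul_def]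
  have expand_charpoly :
      expand R 2 (B * D).charpoly = (scalar m (X ^ 2) - (B * D).map C).det := by
    rw [Matrix.charpoly, AlgHom.map_det]
    congr 1
    ext i j : 1
    simp [charmatrix, diagonal_apply, apply_ite (expand R 2), -Matrix.map_mul]
  calc X ^ Fintype.card m * (fromBlocks 0 B D 0).charpoly
      = (charmatrix (fromBlocks 0 B D 0) * N).det := by
        rw [det_mul, det_N, mul_comm, Matrix.charpoly]
    _ = X ^ Fintype.card n * expand R 2 (B * D).charpoly := by
        rw [charmatrix_mul_N, det_fromBlocks_zero₂₁, expand_charpoly, mul_comm]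
        simp

theorem charpoly_fromBlocks_zero_zero (B D : Matrix n n R) :
    (fromBlocks 0 B D 0).charpoly = expand R 2 (B * D).charpoly :=
  (isRegular_X_pow _).left.eq_iff.mp <| X_pow_mul_charpoly_fromBlocks_zero_zero B D

theorem fromBlocks_zero_zero_mem_unitaryGroup [StarRing R] {B D : Matrix n n R}
    (hB : B ∈ unitaryGroup n R) (hD : D ∈ unitaryGroup n R) :
    fromBlocks 0 B D 0 ∈ unitaryGroup (n ⊕ n) R := by
  rw [mem_unitaryGroup_iff, star_eq_conjTranspose] at hB hD ⊢
  simp [fromBlocks_conjTranspose, fromBlocks_multiply, hB, hD]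

end BlockAntidiagonal

section ConstacyclicShift

variable {R : Type*}

/-- The `c`-constacyclic shift `(x₀, …, xₙ) ↦ (x₁, …, xₙ, c x₀)` of coding theory, given by its
columns. The size is `n + 1` so that the corner entry `c` always exists. -/
def constacyclicShift [Zero R] [One R] (n : ℕ) (c : R) : Matrix (Fin (n + 1)) (Fin (n + 1)) R :=
  Matrix.of fun i ↦
    Fin.cons (if i = Fin.last n then c else 0) fun j ↦ if i = j.castSucc then 1 else 0

@[simp]
theorem constacyclicShift_apply_zero [Zero R] [One R] {n : ℕ} (c : R) (i : Fin (n + 1)) :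
    constacyclicShift n c i 0 = if i = Fin.last n then c else 0 :=
  rfl

@[simp]
theorem constacyclicShift_apply_succ [Zero R] [One R] {n : ℕ} (c : R) (i : Fin (n + 1))
    (j : Fin n) : constacyclicShift n c i j.succ = if i = j.castSucc then 1 else 0 :=
  rfl

theorem constacyclicShift_mem_unitaryGroup [CommRing R] [StarRing R] (n : ℕ) {c : R}
    (hc : star c * c = 1) : constacyclicShift n c ∈ unitaryGroup (Fin (n + 1)) R := by
  rw [mem_unitaryGroup_iff']
  ext j k
  cases j using Fin.cases <;> cases k using Fin.cases <;>
    simp [mul_apply, star_apply, apply_ite star, one_apply, hc, (Fin.succ_ne_zero _).symm, eq_comm]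

theorem charmatrix_constacyclicShift_apply_zero [CommRing R] {n : ℕ} (c : R) (i : Fin (n + 1)) :
    charmatrix (constacyclicShift n c) i 0 =
      (if i = 0 then X else 0) - if i = Fin.last n then C c else 0 := by
  simp [charmatrix, diagonal_apply, apply_ite C]

theorem det_charmatrix_constacyclicShift_submatrix_succ_succ [CommRing R] (n : ℕ) (c : R) :
    ((charmatrix (constacyclicShift n c)).submatrix Fin.succ Fin.succ).det = X ^ n := by
  rw [det_of_isUpperTriangular]
  · simp [Fin.ext_iff]
  · intro i j (hij : j < i)
    have succ_ne_castSucc : i.succ ≠ j.castSucc :=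
      ((Fin.castSucc_lt_castSucc_iff.2 hij).trans Fin.castSucc_lt_succ).ne'
    simp [hij.ne', succ_ne_castSucc]

theorem det_charmatrix_constacyclicShift_submatrix_castSucc_succ [CommRing R] (n : ℕ) (c : R) :
    ((charmatrix (constacyclicShift n c)).submatrix Fin.castSucc Fin.succ).det = (-1) ^ n := by
  rw [det_of_isLowerTriangular]
  · simp [Fin.ext_iff]
  · intro i j (hij : i < j)
    have castSucc_ne_succ : i.castSucc ≠ j.succ :=
      ((Fin.castSucc_lt_castSucc_iff.2 hij).trans Fin.castSucc_lt_succ).ne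
    simp [hij.ne, castSucc_ne_succ]

theorem charpoly_constacyclicShift [CommRing R] (n : ℕ) (c : R) :
    (constacyclicShift n c).charpoly = X ^ (n + 1) - C c := by
  have sign_cancel : (-1 : R[X]) ^ n * C c * (-1) ^ n = C c := by
    rw [mul_right_comm, ← mul_pow, neg_one_mul, neg_neg, one_pow, one_mul]
  rw [Matrix.charpoly, det_succ_column_zero]
  simp [charmatrix_constacyclicShift_apply_zero, mul_sub, sub_mul,
    det_charmatrix_constacyclicShift_submatrix_succ_succ,
    det_charmatrix_constacyclicShift_submatrix_castSucc_succ, sign_cancel, pow_succ']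

end ConstacyclicShift

theorem isGreatest_re_image_pow_eq_neg_one {m : ℕ} (hm : m ≠ 0) :
    IsGreatest (Complex.re '' {z | z ^ m = -1}) (Real.cos (Real.pi / m)) := by
  have hm_pos : (0 : ℝ) < m := by positivity
  refine ⟨⟨Complex.exp ((Real.pi / m : ℝ) * Complex.I), ?_, Complex.exp_ofReal_mul_I_re _⟩, ?_⟩
  · change Complex.exp _ ^ m = -1
    rw [← Complex.exp_nat_mul, ← Complex.exp_pi_mul_I]
    congr 1
    push_cast
    field_simp
  rintro _ ⟨z, hz : z ^ m = -1, rfl⟩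
  have norm_z : ‖z‖ = 1 := by
    rw [← pow_eq_one_iff_of_nonneg (norm_nonneg z) hm, ← norm_pow, hz, norm_neg, norm_one]
  have pi_div_le : Real.pi / m ≤ |z.arg| := by
    by_contra! hlt
    rw [lt_div_iff₀' hm_pos, ← Nat.abs_cast m, ← abs_mul, abs_lt] at hlt
    have mul_arg_coe : ((m * z.arg : ℝ) : Real.Angle) = Real.pi := by
      rw [← Complex.arg_neg_one, ← hz, Complex.arg_pow_coe_angle, ← nsmul_eq_mul,
        Real.Angle.coe_nsmul]
    have mul_arg : m * z.arg = Real.pi := by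
      rw [← Real.Angle.toReal_coe_eq_self_iff.2 ⟨hlt.1, hlt.2.le⟩, mul_arg_coe,
        Real.Angle.toReal_pi]
    exact hlt.2.ne mul_arg
  calc z.re = Real.cos |z.arg| := by
        rw [Real.cos_abs, ← Complex.norm_mul_cos_arg, norm_z, one_mul]
    _ ≤ Real.cos (Real.pi / m) :=
        Real.cos_le_cos_of_nonneg_of_le_pi (by positivity) (Complex.abs_arg_le_pi z) pi_div_le

open scoped Pointwise in
theorem spectrum_real_add_star {A : Type*} [CStarAlgebra A] (a : A) [IsStarNormal a] :
    spectrum ℝ (a + star a) = (2 * ·) '' (Complex.re '' spectrum ℂ a) := by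
  have add_star : a + star a = Units.mk0 (2 : ℝ) two_ne_zero • (ℜ a : A) := by
    rw [realPart_apply_coe, Units.smul_mk0, smul_inv_smul₀ two_ne_zero]
  rw [add_star, spectrum.unit_smul_eq_smul, spectrum_realPart' a]
  rfl

/-- The unitary matrix `U` with `chainW (n + 1) = U + U*`: up to a permutation, the negacyclic shift
of size `2 * (n + 1)`, its even- and odd-indexed coordinates being collected in one block each. -/
def chainU (n : ℕ) : Matrix (Fin (n + 1) ⊕ Fin (n + 1)) (Fin (n + 1) ⊕ Fin (n + 1)) ℂ :=
  fromBlocks 0 1 (constacyclicShift n (-1)) 0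

theorem chainU_mem_unitaryGroup (n : ℕ) : chainU n ∈ unitaryGroup (Fin (n + 1) ⊕ Fin (n + 1)) ℂ :=
  fromBlocks_zero_zero_mem_unitaryGroup (one_mem _)
    (constacyclicShift_mem_unitaryGroup n (by simp))

theorem spectrum_chainU (n : ℕ) : spectrum ℂ (chainU n) = {z | z ^ (2 * (n + 1)) = -1} := by
  ext z
  simp [mem_spectrum_iff_isRoot_charpoly, chainU, charpoly_fromBlocks_zero_zero,
    charpoly_constacyclicShift, pow_mul, add_eq_zero_iff_eq_neg]

theorem chainA_succ (n : ℕ) : chainA (n + 1) = 1 + constacyclicShift n (-1) := by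
  ext i j
  cases j using Fin.cases <;>
    simp only [chainA, of_apply, Matrix.add_apply, one_apply, constacyclicShift_apply_zero,
      constacyclicShift_apply_succ, Fin.ext_iff, Fin.val_zero, Fin.val_succ, Fin.val_last,
      Fin.val_castSucc] <;>
    grind

theorem chainW_succ (n : ℕ) : chainW (n + 1) = chainU n + star (chainU n) := by
  simp [chainW, chainU, chainA_succ, star_eq_conjTranspose, fromBlocks_conjTranspose,
    fromBlocks_add, add_comm]

open scoped Matrix.Norms.L2Operator in
theorem spectrum_real_chainW_succ (n : ℕ) : spectrum ℝ (chainW (n + 1)) =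
    (2 * ·) '' (Complex.re '' {z | z ^ (2 * (n + 1)) = -1}) := by
  have : IsStarNormal (chainU n) := isStarNormal_of_mem_unitary (chainU_mem_unitaryGroup n)
  rw [chainW_succ, spectrum_real_add_star, spectrum_chainU]

/-- The largest eigenvalue of the Hermitian matrix `W = [[0, Aᴴ], [A, 0]]` is
`2 cos (π / (2n))`. -/
theorem chainW_largest_eigenvalue
    (n : ℕ) (hn : 1 ≤ n) (hW : (chainW n).IsHermitian) :
    (⨆ i, hW.eigenvalues i) = 2 * Real.cos (Real.pi / (2 * n)) := by
  obtain ⟨n, rfl⟩ := Nat.exists_eq_add_of_le' hn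
  have greatest := (monotone_mul_left_of_nonneg zero_le_two).map_isGreatest
    (isGreatest_re_image_pow_eq_neg_one (m := 2 * (n + 1)) (by positivity))
  rw [← spectrum_real_chainW_succ, hW.spectrum_real_eq_range_eigenvalues] at greatest
  rw [← sSup_range, greatest.csSup_eq]
  push_cast
  rfl
end

section
/- Let n ≥ 1, let A be the n×n complex matrix with A_{jj} = 1 for all j, A_{j,j+1} = 1 for j = 1,…,n−1, A_{n,1} = −1, and all other entries 0, and let W be the 2n×2n Hermitian block matrix W = [[0, Aᴴ], [A, 0]]. Then the matrix cos(π/(2n))·I_{2n} − (1/2)·W is positive semidefinite. -/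
open Matrix
open scoped ComplexOrder

/-! Write `chainA n = 1 + S`, where `S` is the shift with a sign flip on wrapping around. Then
`U = [[0, 1], [S, 0]]` is the corresponding shift on the `2n` interleaved coordinates
`x₀, y₀, x₁, y₁, …`, and `chainW n = U + Uᴴ` is twice its real part. Since `U` is unitary and
`U ^ (2 * n) = -1`, its eigenvalues are among the numbers `exp (i (2k + 1) π / (2n))`, whose real
parts are at most `cos (π / (2n))`. -/

open scoped ComplexStarModule

section SpectralBound

theorem re_le_cos_pi_div_of_pow_eq_neg_one {z : ℂ} {n : ℕ} (hz : z ^ n = -1) :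
    z.re ≤ Real.cos (Real.pi / n) := by
  have hn : n ≠ 0 := by
    rintro rfl
    norm_num at hz
  have hn_pos : (0 : ℝ) < n := by positivity
  have hnorm : ‖z‖ = 1 :=
    Complex.norm_eq_one_of_pow_eq_one (n := n * 2) (by rw [pow_mul, hz, neg_one_sq]) (by lia)
  have hre : z.re = Real.cos |z.arg| := by
    rw [Real.cos_abs, ← Complex.norm_mul_cos_arg, hnorm, one_mul]
  have hcos : Real.cos (n * |z.arg|) = -1 := by
    have hexp_arg : Complex.exp (z.arg * Complex.I) = z := by
      simpa [hnorm] using Complex.norm_mul_exp_arg_mul_I z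
    have hexp : Complex.exp (↑(n * z.arg) * Complex.I) = -1 := by
      rw [Complex.ofReal_mul, Complex.ofReal_natCast, mul_assoc, Complex.exp_nat_mul, hexp_arg, hz]
    rw [← Nat.abs_cast, ← abs_mul, Real.cos_abs, ← Complex.exp_ofReal_mul_I_re, hexp,
      Complex.neg_re, Complex.one_re]
  have harg : Real.pi / n ≤ |z.arg| := by
    rw [div_le_iff₀' hn_pos]
    by_contra! hlt
    have hcos_lt := Real.cos_lt_cos_of_nonneg_of_le_pi (by positivity) le_rfl hlt
    rw [hcos, Real.cos_pi] at hcos_lt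
    exact hcos_lt.false
  rw [hre]
  exact Real.cos_le_cos_of_nonneg_of_le_pi (by positivity) (Complex.abs_arg_le_pi z) harg

theorem pow_eq_of_mem_spectrum {𝕜 A : Type*} [Field 𝕜] [Ring A] [Algebra 𝕜 A] {a : A} {n : ℕ}
    {c z : 𝕜} (ha : a ^ n = algebraMap 𝕜 A c) (hz : z ∈ spectrum 𝕜 a) : z ^ n = c := by
  cases subsingleton_or_nontrivial A with
  | inl _ => simp at hz
  | inr _ =>
    have hpow := spectrum.pow_mem_pow a n hz
    rwa [ha, spectrum.scalar_eq, Set.mem_singleton_iff] at hpow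

theorem realPart_le_cos_pi_div_of_pow_eq_neg_one {A : Type*} [CStarAlgebra A] [PartialOrder A]
    [StarOrderedRing A] {a : A} [IsStarNormal a] {n : ℕ} (ha : a ^ n = -1) :
    (ℜ a : A) ≤ algebraMap ℝ A (Real.cos (Real.pi / n)) := by
  refine le_algebraMap_of_spectrum_le ?_
  rw [spectrum_realPart' a]
  rintro _ ⟨z, hz, rfl⟩
  have hscalar : a ^ n = algebraMap ℂ A (-1) := by rw [ha, map_neg, map_one]
  exact re_le_cos_pi_div_of_pow_eq_neg_one (pow_eq_of_mem_spectrum hscalar hz)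

open scoped MatrixOrder Matrix.Norms.L2Operator in
theorem posSemidef_cos_pi_div_smul_one_sub_realPart {ι : Type*} [Fintype ι] [DecidableEq ι]
    {U : Matrix ι ι ℂ} [IsStarNormal U] {n : ℕ} (hU : U ^ n = -1) :
    ((Real.cos (Real.pi / n) : ℂ) • (1 : Matrix ι ι ℂ) - ℜ U).PosSemidef := by
  have hle := Matrix.le_iff.mp (realPart_le_cos_pi_div_of_pow_eq_neg_one hU)
  rwa [Algebra.algebraMap_eq_smul_one, ← Complex.coe_smul] at hle

end SpectralBound

section WeightedPermutation

variable {ι R : Type*} [Fintype ι]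

theorem prod_range_card_pow_apply_of_isCycleOn_univ [CommMonoid R] {σ : Equiv.Perm ι}
    (hσ : σ.IsCycleOn Set.univ) (d : ι → R) (j : ι) :
    ∏ i ∈ Finset.range (Fintype.card ι), d ((σ ^ i) j) = ∏ i, d i := by
  rw [← Finset.coe_univ] at hσ
  refine Finset.prod_nbij (fun i => (σ ^ i) j) (fun _ _ => Finset.mem_univ _) ?_ ?_
    fun _ _ => rfl
  · intro a ha b hb hab
    rw [Finset.coe_range, Set.mem_Iio] at ha hb
    exact ((hσ.pow_apply_eq_pow_apply (Finset.mem_univ j)).mp hab).eq_of_lt_of_lt ha hb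
  · intro k _
    obtain ⟨i, hi, hik⟩ := hσ.exists_pow_eq (Finset.mem_univ j) (Finset.mem_univ k)
    exact ⟨i, Finset.mem_coe.mpr (Finset.mem_range.mpr hi), hik⟩

theorem isCycleOn_finRotate_univ (n : ℕ) : (finRotate n).IsCycleOn Set.univ := by
  match n with
  | 0 | 1 => exact Equiv.Perm.isCycleOn_of_subsingleton _ _
  | n + 2 =>
    rw [← Finset.coe_univ, ← support_finRotate, Equiv.Perm.coe_support_eq_set_support]
    exact isCycle_finRotate.isCycleOn

variable [DecidableEq ι]

theorem permMatrix_mul_diagonal_pow_mulVec [CommRing R] (σ : Equiv.Perm ι) (d v : ι → R) (m : ℕ)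
    (j : ι) :
    ((σ.permMatrix R * diagonal d) ^ m *ᵥ v) j =
      (∏ i ∈ Finset.range m, d ((σ ^ i) (σ j))) * v ((σ ^ m) j) := by
  induction m generalizing j with
  | zero => simp
  | succ m ih =>
    rw [pow_succ', ← mulVec_mulVec, ← mulVec_mulVec, permMatrix_mulVec, Function.comp_apply,
      mulVec_diagonal, ih, Finset.prod_range_succ']
    simp only [pow_succ, Equiv.Perm.mul_apply, pow_zero, Equiv.Perm.one_apply]
    ring

theorem permMatrix_mul_diagonal_pow_card [CommRing R] {σ : Equiv.Perm ι}
    (hσ : σ.IsCycleOn Set.univ) (d : ι → R) :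
    (σ.permMatrix R * diagonal d) ^ Fintype.card ι = (∏ i, d i) • 1 := by
  have hσ_pow (j : ι) : (σ ^ Fintype.card ι) j = j := by
    rw [← Finset.coe_univ] at hσ
    exact hσ.pow_card_apply (Finset.mem_univ j)
  refine ext_of_mulVec_single fun k => funext fun j => ?_
  rw [permMatrix_mul_diagonal_pow_mulVec, prod_range_card_pow_apply_of_isCycleOn_univ hσ, hσ_pow,
    smul_mulVec, one_mulVec, Pi.smul_apply, smul_eq_mul]

theorem permMatrix_mem_unitary [Semiring R] [StarRing R] (σ : Equiv.Perm ι) :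
    σ.permMatrix R ∈ unitary (Matrix ι ι R) := by
  rw [Unitary.mem_iff, star_eq_conjTranspose, conjTranspose_permMatrix, ← permMatrix_mul,
    ← permMatrix_mul, mul_inv_cancel, inv_mul_cancel, permMatrix_one]
  exact ⟨rfl, rfl⟩

theorem diagonal_mem_unitary [Semiring R] [StarRing R] {d : ι → R}
    (hd : ∀ i, d i ∈ unitary R) :
    diagonal d ∈ unitary (Matrix ι ι R) := by
  simp only [Unitary.mem_iff] at hd
  rw [Unitary.mem_iff, star_eq_conjTranspose, diagonal_conjTranspose, diagonal_mul_diagonal,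
    diagonal_mul_diagonal, ← diagonal_one]
  exact ⟨congrArg diagonal (funext fun i => (hd i).1), congrArg diagonal (funext fun i => (hd i).2)⟩

end WeightedPermutation

section InterleavedShift

variable {ι R : Type*} [DecidableEq ι]

/-- The map `(x, y) ↦ (y, B x)`. If `B` is a shift, this is the shift on the interleaved
coordinates `x₀, y₀, x₁, y₁, …`. -/
def interleavedShift [Zero R] [One R] (B : Matrix ι ι R) : Matrix (ι ⊕ ι) (ι ⊕ ι) R :=
  fromBlocks 0 1 B 0

theorem interleavedShift_mem_unitary [Fintype ι] [Semiring R] [StarRing R] {B : Matrix ι ι R}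
    (hB : B ∈ unitary (Matrix ι ι R)) :
    interleavedShift B ∈ unitary (Matrix (ι ⊕ ι) (ι ⊕ ι) R) := by
  rw [Unitary.mem_iff, star_eq_conjTranspose] at hB ⊢
  simp [interleavedShift, fromBlocks_conjTranspose, fromBlocks_multiply, hB]

theorem interleavedShift_pow_two_mul [Fintype ι] [Semiring R] (B : Matrix ι ι R) (n : ℕ) :
    interleavedShift B ^ (2 * n) = fromBlocks (B ^ n) 0 0 (B ^ n) := by
  have hsq : interleavedShift B ^ 2 = fromBlocks B 0 0 B := by
    simp [interleavedShift, pow_two, fromBlocks_multiply]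
  rw [pow_mul, hsq, fromBlocks_diagonal_pow]

theorem realPart_interleavedShift (B : Matrix ι ι ℂ) :
    (ℜ (interleavedShift B) : Matrix (ι ⊕ ι) (ι ⊕ ι) ℂ) =
      (1 / 2 : ℂ) • fromBlocks 0 (1 + B)ᴴ (1 + B) 0 := by
  rw [realPart_apply_coe, interleavedShift, star_eq_conjTranspose, fromBlocks_conjTranspose,
    fromBlocks_add]
  simp [← Complex.coe_smul, add_comm]

end InterleavedShift

section AntiperiodicShift

variable (n : ℕ) [NeZero n]

/-- The shift `(S x) j = x (j + 1)` on vectors extended antiperiodically by `x n = -x 0`. -/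
def antiperiodicShift : Matrix (Fin n) (Fin n) ℂ :=
  (finRotate n).permMatrix ℂ * diagonal (Pi.mulSingle 0 (-1))

theorem antiperiodicShift_mem_unitary :
    antiperiodicShift n ∈ unitary (Matrix (Fin n) (Fin n) ℂ) := by
  refine mul_mem (permMatrix_mem_unitary _) (diagonal_mem_unitary fun k => ?_)
  rw [Pi.mulSingle_apply]
  split_ifs
  · simp [Unitary.mem_iff]
  · exact one_mem _

theorem antiperiodicShift_pow : antiperiodicShift n ^ n = -1 := by
  have hpow := permMatrix_mul_diagonal_pow_card (isCycleOn_finRotate_univ n)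
    (Pi.mulSingle 0 (-1 : ℂ))
  rwa [Fintype.card_fin, Fintype.prod_pi_mulSingle', neg_one_smul] at hpow

theorem chainA_eq_one_add_antiperiodicShift : chainA n = 1 + antiperiodicShift n := by
  ext j k
  have hsucc : ((j + 1 : Fin n) : ℕ) = if (j : ℕ) + 1 = n then 0 else (j : ℕ) + 1 := by
    split_ifs with h
    · simp [Fin.val_add, h]
    · exact Fin.val_add_one_of_lt' (by lia)
  simp only [chainA, antiperiodicShift, of_apply, Matrix.add_apply, one_apply, mul_diagonal,
    Equiv.Perm.permMatrix, PEquiv.toMatrix_apply, Equiv.toPEquiv_apply, Option.mem_some_iff,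
    Pi.mulSingle_apply, finRotate_apply, Fin.ext_iff, Fin.val_zero, hsucc]
  grind

end AntiperiodicShift

/-- Feasibility of the dual solution `λ' = cos(π/(2n))·(1,…,1)` for the chained CHSH
semidefinite program: `cos(π/(2n))·I - (1/2)·W` is positive semidefinite. -/
theorem chainW_dual_feasible (n : ℕ) (hn : 1 ≤ n) :
    (((Real.cos (Real.pi / (2 * n)) : ℂ) • (1 : Matrix (Fin n ⊕ Fin n) (Fin n ⊕ Fin n) ℂ))
        - (1 / 2 : ℂ) • chainW n).PosSemidef := by
  have : NeZero n := ⟨by lia⟩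
  let U := interleavedShift (antiperiodicShift n)
  have hU_normal : IsStarNormal U :=
    isStarNormal_of_mem_unitary (interleavedShift_mem_unitary (antiperiodicShift_mem_unitary n))
  have hU_pow : U ^ (2 * n) = -1 := by
    rw [interleavedShift_pow_two_mul, antiperiodicShift_pow, ← fromBlocks_one, fromBlocks_neg,
      neg_zero]
  have hU_real : (ℜ U : Matrix (Fin n ⊕ Fin n) (Fin n ⊕ Fin n) ℂ) = (1 / 2 : ℂ) • chainW n := by
    rw [realPart_interleavedShift, ← chainA_eq_one_add_antiperiodicShift, chainW]
  have hpos := posSemidef_cos_pi_div_smul_one_sub_realPart hU_pow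
  rwa [hU_real, Nat.cast_mul, Nat.cast_two] at hpos
end

section
/- Let W be the 4×4 real symmetric matrix with rows (0,0,1,1), (0,0,1,−1), (1,1,0,0), (1,−1,0,0). Then the matrix (1/√2)·I_4 − (1/2)·W is positive semidefinite. -/
open Matrix

/-!
If `A` is Hermitian and `c > 0`, then `2c (c - A) = (c - A)² + (c² - A²)`, so `A² ≤ c²` forces
`A ≤ c`. The CHSH matrix satisfies `W² = 2`, hence `(W / 2)² = 1 / 2 = (1 / √2)²`.
-/

theorem posSemidef_smul_one_sub_of_posSemidef_sq_sub_sq {n R K : Type*} [Fintype n] [DecidableEq n]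
    [Ring R] [PartialOrder R] [StarRing R] [StarOrderedRing R]
    [Field K] [PartialOrder K] [PosMulReflectLT K] [StarRing K] [StarOrderedRing K]
    [Algebra K R] [StarModule K R] [PosSMulMono K R] {A : Matrix n n R} {c : K}
    (hA : A.IsHermitian) (hc : 0 < c) (hsq : (c ^ 2 • (1 : Matrix n n R) - A ^ 2).PosSemidef) :
    (c • (1 : Matrix n n R) - A).PosSemidef := by
  have hsub : (c • (1 : Matrix n n R) - A).IsHermitian :=
    (isHermitian_one.smul (.of_nonneg hc.le)).sub hA
  have hsub_sq : ((c • (1 : Matrix n n R) - A) ^ 2).PosSemidef := by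
    simpa only [hsub.eq, ← sq] using posSemidef_conjTranspose_mul_self (c • (1 : Matrix n n R) - A)
  have two_mul_pos : 0 < 2 * c := by
    rw [two_mul]
    exact add_pos hc hc
  have hsum : (2 * c) • (c • (1 : Matrix n n R) - A) =
      (c • 1 - A) ^ 2 + (c ^ 2 • 1 - A ^ 2) := by
    simp only [sq, sub_mul, mul_sub, smul_mul_assoc, mul_smul_comm, one_mul, mul_one]
    module
  rw [(eq_inv_smul_iff₀ two_mul_pos.ne').2 hsum]
  exact (hsub_sq.add hsq).smul (inv_nonneg.2 two_mul_pos.le)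

/-- The coefficient matrix of the CHSH semidefinite program. The first two indices are the
settings of one party, the last two those of the other. -/
def chshMatrix (R : Type*) [Ring R] : Matrix (Fin 4) (Fin 4) R :=
  !![0, 0, 1, 1; 0, 0, 1, -1; 1, 1, 0, 0; 1, -1, 0, 0]

theorem isHermitian_chshMatrix (R : Type*) [Ring R] [StarRing R] :
    (chshMatrix R).IsHermitian := by
  ext i j
  fin_cases i <;> fin_cases j <;> simp [chshMatrix]

theorem chshMatrix_sq (R : Type*) [Ring R] : chshMatrix R ^ 2 = (2 : R) • 1 := by
  ext i j
  fin_cases i <;> fin_cases j <;> simp [chshMatrix, sq, one_add_one_eq_two]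

/-- Feasibility of the dual solution `λ' = (1/√2)·(1,1,1,1)` for the CHSH semidefinite
program: with `W` the CHSH coefficient matrix, `(1/√2)·I - (1/2)·W` is positive
semidefinite. This certifies Tsirelson's bound `2√2`. -/
theorem chsh_dual_feasible
    (W : Matrix (Fin 4) (Fin 4) ℝ)
    (hW : W = !![0, 0, 1, 1; 0, 0, 1, -1; 1, 1, 0, 0; 1, -1, 0, 0]) :
    ((1 / Real.sqrt 2) • (1 : Matrix (Fin 4) (Fin 4) ℝ) - (1 / 2 : ℝ) • W).PosSemidef := by
  obtain rfl : W = chshMatrix ℝ := hW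
  have hscalar : (1 / 2 : ℝ) ^ 2 * 2 = (1 / √2) ^ 2 := by
    rw [div_pow 1 √2, Real.sq_sqrt zero_le_two]
    norm_num
  have hsq : ((1 / 2 : ℝ) • chshMatrix ℝ) ^ 2 = (1 / √2) ^ 2 • 1 := by
    rw [smul_pow, chshMatrix_sq, smul_smul, hscalar]
  refine posSemidef_smul_one_sub_of_posSemidef_sq_sub_sq
    ((isHermitian_chshMatrix ℝ).smul (.all _)) (by positivity) ?_
  rw [hsq, sub_self]
  exact .zero
end

section
/- Let n ≥ 1 and let a_1,…,a_n, b_1,…,b_n ∈ {−1, 1}. Then |∑_{i=1}^{n} a_i·b_i + ∑_{i=1}^{n-1} a_{i+1}·b_i − a_1·b_n| ≤ 2n − 2. -/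
/-!
The chained expression with `m + 1` settings is a sum of `m` CHSH expressions: the `i`-th involves
Alice's settings `0`, `i + 1` and Bob's settings `i`, `i + 1`, and the terms `± a 0 * b i` of
neighbouring CHSH expressions cancel. Each CHSH expression has absolute value at most `2`.
-/

theorem abs_add_add_abs_sub_le {G : Type*} [AddCommGroup G] [LinearOrder G] [IsOrderedAddMonoid G]
    {x y c : G} (hx : |x| ≤ c) (hy : |y| ≤ c) : |x + y| + |x - y| ≤ c + c := by
  rw [abs_le] at hx hy
  grind

theorem abs_chsh_le_two {R : Type*} [Ring R] [LinearOrder R] [IsOrderedRing R]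
    {a a' b b' : R} (ha : |a| ≤ 1) (ha' : |a'| ≤ 1) (hb : |b| ≤ 1) (hb' : |b'| ≤ 1) :
    |a * (b + b') + a' * (b - b')| ≤ 2 :=
  calc |a * (b + b') + a' * (b - b')|
      ≤ |a| * |b + b'| + |a'| * |b - b'| := by
        simpa only [abs_mul] using abs_add_le (a * (b + b')) (a' * (b - b'))
    _ ≤ |b + b'| + |b - b'| :=
        add_le_add (mul_le_of_le_one_left (abs_nonneg _) ha)
          (mul_le_of_le_one_left (abs_nonneg _) ha')
    _ ≤ 1 + 1 := abs_add_add_abs_sub_le hb hb'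
    _ = 2 := one_add_one_eq_two

theorem chained_chsh_eq_sum_chsh {R : Type*} [NonUnitalNonAssocRing R] (a b : ℕ → R) (m : ℕ) :
    (∑ i ∈ Finset.range (m + 1), a i * b i) + (∑ i ∈ Finset.range m, a (i + 1) * b i) - a 0 * b m
      = ∑ i ∈ Finset.range m, (a (i + 1) * (b i + b (i + 1)) + a 0 * (b i - b (i + 1))) := by
  simp only [mul_add, mul_sub, Finset.sum_add_distrib, Finset.sum_range_sub',
    Finset.sum_range_succ' (fun i => a i * b i)]
  abel

theorem chained_chsh_classical_bound_general {R : Type*} [Ring R] [LinearOrder R] [IsOrderedRing R]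
    (n : ℕ) (hn : 1 ≤ n) (a b : ℕ → R) (ha : ∀ i < n, |a i| ≤ 1) (hb : ∀ i < n, |b i| ≤ 1) :
    |(∑ i ∈ Finset.range n, a i * b i) + (∑ i ∈ Finset.range (n - 1), a (i + 1) * b i)
        - a 0 * b (n - 1)| ≤ 2 * n - 2 := by
  obtain ⟨m, rfl⟩ := Nat.exists_eq_add_of_le' hn
  rw [Nat.add_sub_cancel, chained_chsh_eq_sum_chsh]
  have chsh_le (i : ℕ) (hi : i ∈ Finset.range m) :
      |a (i + 1) * (b i + b (i + 1)) + a 0 * (b i - b (i + 1))| ≤ 2 := by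
    have him : i < m := Finset.mem_range.mp hi
    exact abs_chsh_le_two (ha _ (by lia)) (ha 0 (by lia)) (hb _ (by lia)) (hb _ (by lia))
  calc |∑ i ∈ Finset.range m, (a (i + 1) * (b i + b (i + 1)) + a 0 * (b i - b (i + 1)))|
      ≤ ∑ i ∈ Finset.range m, |a (i + 1) * (b i + b (i + 1)) + a 0 * (b i - b (i + 1))| :=
        Finset.abs_sum_le_sum_abs _ _
    _ ≤ m • 2 := by simpa only [Finset.card_range] using Finset.sum_le_card_nsmul _ _ 2 chsh_le
    _ = 2 * (m + 1 : ℕ) - 2 := by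
        rw [nsmul_eq_mul, Nat.cast_add_one, mul_add_one, add_sub_cancel_right, Nat.cast_comm]

/-- The classical (local hidden variable) bound for the chained CHSH inequality with `n`
measurement settings: for deterministic outcomes `a i, b i ∈ {-1, 1}`,
`|∑ a i b i + ∑ a (i+1) b i - a 0 b (n-1)| ≤ 2n - 2`. -/
theorem chained_chsh_classical_bound
    (n : ℕ) (hn : 1 ≤ n) (a b : ℕ → ℝ)
    (ha : ∀ i < n, a i = 1 ∨ a i = -1) (hb : ∀ i < n, b i = 1 ∨ b i = -1) :
    |(∑ i ∈ Finset.range n, a i * b i) + (∑ i ∈ Finset.range (n - 1), a (i + 1) * b i)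
        - a 0 * b (n - 1)| ≤ 2 * n - 2 :=
  chained_chsh_classical_bound_general n hn a b
    (fun i hi => ((abs_eq zero_le_one).mpr (ha i hi)).le)
    (fun i hi => ((abs_eq zero_le_one).mpr (hb i hi)).le)
end
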